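/- arXiv:1512.05177 — 2 statements merged into one kernel-verified Lean document; each statement's English description precedes it below -/
import Mathlib

section
/- Let A₁ and A₂ be deterministic pushdown automata over a finite alphabet Σ and let # ∉ Σ; regard A₁ and A₂ as DPDAs over Σ ∪ {#} having no transitions on the letter # (so neither accepts any word containing #). Then the DPLDL formula φ := ⟨A₁⟩# ∧ ⟨A₂⟩# over the alphabet Σ ∪ {#} is satisfiable if and only if L(A₁) ∩ L(A₂) ≠ ∅. -/
/-!
A lifted automaton gets stuck on `#`, so a word it accepts is a word over `Σ` (accepted by the
original automaton, `DPDA.exists_of_lift_accepts`). If `α` satisfies `⟨A₁⟩# ∧ ⟨A₂⟩#` with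
witnesses `l₁`, `l₂`, both are positions of `#` preceded by no `#`; hence both are the first
position of `#`, so `l₁ = l₂` and the two accepted prefixes are the same word.
Conversely a common word `w` gives the model `w ###⋯`.
-/

/-- A deterministic pushdown automaton with states `Fin n` and stack alphabet `Fin m`
over the alphabet `A`: in each state, for each input letter and each top-of-stack
symbol there is at most one move, which replaces the top symbol by a finite word over
the stack alphabet. The initial stack consists of the bottom marker `z0` only. -/
structure DPDA (A : Type) (n m : ℕ) where
  δ : Fin n → A → Fin m → Option (Fin n × List (Fin m))
  start : Fin n
  z0 : Fin m
  final : Fin n → Bool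

/-- One step of a DPDA on a configuration (undefined on the empty stack or when the
transition function gives no move). -/
def DPDA.stepc {A : Type} {n m : ℕ} (M : DPDA A n m) :
    Fin n × List (Fin m) → A → Option (Fin n × List (Fin m))
  | (_, []), _ => none
  | (q, g :: s), a => (M.δ q a g).map (fun p => (p.1, p.2 ++ s))

/-- The run of a DPDA on a finite word from a configuration. -/
def DPDA.run {A : Type} {n m : ℕ} (M : DPDA A n m) :
    Fin n × List (Fin m) → List A → Option (Fin n × List (Fin m))
  | c, [] => some c
  | c, a :: w => (M.stepc c a).bind (fun c' => M.run c' w)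

/-- A DPDA accepts a finite word if its run from the initial configuration exists and
ends in a final state. -/
def DPDA.Accepts {A : Type} {n m : ℕ} (M : DPDA A n m) (w : List A) : Prop :=
  ∃ c, M.run (M.start, [M.z0]) w = some c ∧ M.final c.1 = true

/-- DPLDL formulas over the alphabet `A`: atoms are letters, and the temporal operators
are guarded by deterministic pushdown automata. -/
inductive DPLDL (A : Type) : Type
  | atom (a : A)
  | neg (φ : DPLDL A)
  | and (φ ψ : DPLDL A)
  | or (φ ψ : DPLDL A)
  | dia (n m : ℕ) (M : DPDA A n m) (φ : DPLDL A)
  | box (n m : ℕ) (M : DPDA A n m) (φ : DPLDL A)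

/-- The infix `α_k ⋯ α_{l-1}` of an infinite word. -/
def infixW {A : Type} (α : ℕ → A) (k l : ℕ) : List A :=
  (List.range (l - k)).map (fun i => α (k + i))

/-- Satisfaction of DPLDL formulas on infinite words over `A`. -/
def DPLDL.sat {A : Type} : DPLDL A → (ℕ → A) → ℕ → Prop
  | .atom a, α, k => α k = a
  | .neg φ, α, k => ¬ DPLDL.sat φ α k
  | .and φ ψ, α, k => DPLDL.sat φ α k ∧ DPLDL.sat ψ α k
  | .or φ ψ, α, k => DPLDL.sat φ α k ∨ DPLDL.sat ψ α k
  | .dia _ _ M φ, α, k => ∃ l, k ≤ l ∧ M.Accepts (infixW α k l) ∧ DPLDL.sat φ α l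
  | .box _ _ M φ, α, k => ∀ l, k ≤ l → M.Accepts (infixW α k l) → DPLDL.sat φ α l

/-- Regard a DPDA over `Σ` as a DPDA over `Σ ∪ {#}` (with `#` represented by `none`)
having no transitions on the new letter `#`. -/
def DPDA.lift {A : Type} {n m : ℕ} (M : DPDA A n m) : DPDA (Option A) n m where
  δ := fun q a g => match a with
    | some a => M.δ q a g
    | none => none
  start := M.start
  z0 := M.z0
  final := M.final

theorem DPDA.lift_stepc_some {A : Type} {n m : ℕ} (M : DPDA A n m)
    (c : Fin n × List (Fin m)) (a : A) : M.lift.stepc c (some a) = M.stepc c a := by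
  obtain ⟨q, _ | ⟨g, s⟩⟩ := c <;> rfl

theorem DPDA.lift_stepc_none {A : Type} {n m : ℕ} (M : DPDA A n m)
    (c : Fin n × List (Fin m)) : M.lift.stepc c none = none := by
  obtain ⟨q, _ | ⟨g, s⟩⟩ := c <;> rfl

theorem DPDA.lift_run_map {A : Type} {n m : ℕ} (M : DPDA A n m) (w : List A) :
    ∀ c, M.lift.run c (w.map some) = M.run c w := by
  induction w with
  | nil => intro c; rfl
  | cons a w ih =>
    intro c
    simp only [List.map_cons, DPDA.run, DPDA.lift_stepc_some, ih]

theorem DPDA.exists_map_of_lift_run {A : Type} {n m : ℕ} (M : DPDA A n m) (u : List (Option A)) :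
    ∀ c d, M.lift.run c u = some d → ∃ w : List A, u = w.map some := by
  induction u with
  | nil => intro c d _; exact ⟨[], rfl⟩
  | cons a u ih =>
    intro c d h
    cases a with
    | none => simp [DPDA.run, DPDA.lift_stepc_none] at h
    | some a =>
      simp only [DPDA.run, Option.bind_eq_some_iff] at h
      obtain ⟨c', _, h⟩ := h
      obtain ⟨w, rfl⟩ := ih c' d h
      exact ⟨a :: w, rfl⟩

theorem DPDA.lift_accepts_map {A : Type} {n m : ℕ} (M : DPDA A n m) (w : List A) :
    M.lift.Accepts (w.map some) ↔ M.Accepts w := by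
  unfold DPDA.Accepts
  simp only [DPDA.lift_run_map]
  rfl

theorem DPDA.exists_of_lift_accepts {A : Type} {n m : ℕ} (M : DPDA A n m)
    {u : List (Option A)} (h : M.lift.Accepts u) :
    ∃ w : List A, u = w.map some ∧ M.Accepts w := by
  obtain ⟨c, hc, hf⟩ := h
  obtain ⟨w, rfl⟩ := M.exists_map_of_lift_run u _ c hc
  exact ⟨w, rfl, (M.lift_accepts_map w).1 ⟨c, hc, hf⟩⟩

theorem mem_infixW_zero {A : Type} (α : ℕ → A) {i l : ℕ} (h : i < l) :
    α i ∈ infixW α 0 l := by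
  simp only [infixW, List.mem_map, List.mem_range]
  exact ⟨i, by omega, by rw [Nat.zero_add]⟩

/-- The prefix of length `|w|` of the infinite word `w ###⋯`, written with `w[i]?`, which is
`none` from position `|w|` on. -/
theorem infixW_getElem? {A : Type} (w : List A) :
    infixW (fun i => w[i]?) 0 w.length = w.map some := by
  apply List.ext_getElem
  · simp [infixW]
  · intro i h₁ h₂
    have h : i < w.length := by simpa using h₂
    simp [infixW, h]

/-- For DPDAs `A₁`, `A₂` over `Σ` and a fresh letter `#`, the DPLDL
formula `⟨A₁⟩# ∧ ⟨A₂⟩#` over `Σ ∪ {#}` is satisfiable iff `L(A₁) ∩ L(A₂) ≠ ∅`. -/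
theorem dpldl_intersection_reduction (A : Type) [Fintype A] (n₁ m₁ n₂ m₂ : ℕ)
    (M₁ : DPDA A n₁ m₁) (M₂ : DPDA A n₂ m₂) :
    (∃ α : ℕ → Option A,
      DPLDL.sat
        (DPLDL.and (DPLDL.dia n₁ m₁ M₁.lift (DPLDL.atom none))
          (DPLDL.dia n₂ m₂ M₂.lift (DPLDL.atom none))) α 0) ↔
    ∃ w : List A, M₁.Accepts w ∧ M₂.Accepts w := by
  constructor
  · rintro ⟨α, ⟨l₁, -, h₁, e₁⟩, ⟨l₂, -, h₂, e₂⟩⟩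
    have e₁ : α l₁ = none := e₁
    have e₂ : α l₂ = none := e₂
    obtain ⟨w₁, hw₁, a₁⟩ := M₁.exists_of_lift_accepts h₁
    obtain ⟨w₂, hw₂, a₂⟩ := M₂.exists_of_lift_accepts h₂
    have hl : l₁ = l₂ := by
      rcases Nat.lt_trichotomy l₁ l₂ with h | h | h
      · have hm := mem_infixW_zero α h
        simp [hw₂, e₁] at hm
      · exact h
      · have hm := mem_infixW_zero α h
        simp [hw₁, e₂] at hm
    subst hl
    have hw : w₁ = w₂ :=
      List.map_injective_iff.2 (Option.some_injective A) (hw₁.symm.trans hw₂)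
    exact ⟨w₁, a₁, hw ▸ a₂⟩
  · rintro ⟨w, a₁, a₂⟩
    have hend : w[w.length]? = none := by simp
    refine ⟨fun i => w[i]?, ⟨w.length, Nat.zero_le _, ?_, hend⟩,
      ⟨w.length, Nat.zero_le _, ?_, hend⟩⟩
    · rw [infixW_getElem?]
      exact (M₁.lift_accepts_map w).2 a₁
    · rw [infixW_getElem?]
      exact (M₂.lift_accepts_map w).2 a₂
end

section
/- There exists a finite alphabet Σ such that the satisfiability problem for DPLDL formulas over Σ is undecidable: there is no computable function that, given (a natural effective encoding, with states and stack symbols drawn from ℕ, of) a DPLDL formula over Σ, decides whether the formula is satisfiable. -/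
/-- A natural effective encoding of a DPDA (over the alphabet `Fin k`, with states and
stack symbols drawn from `ℕ` via `Fin n` and `Fin m`) as a natural number. -/
def DPDA.code {k n m : ℕ} (M : DPDA (Fin k) n m) : ℕ :=
  Encodable.encode
    (n, m,
      List.ofFn (fun q => List.ofFn (fun a => List.ofFn (fun g => M.δ q a g))),
      M.start.val, M.z0.val,
      List.ofFn (fun q => M.final q))

/-- A natural effective encoding of DPLDL formulas over `Fin k` as natural numbers. -/
def DPLDL.code {k : ℕ} : DPLDL (Fin k) → ℕ
  | .atom a => Nat.pair 0 a.val
  | .neg φ => Nat.pair 1 φ.code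
  | .and φ ψ => Nat.pair 2 (Nat.pair φ.code ψ.code)
  | .or φ ψ => Nat.pair 3 (Nat.pair φ.code ψ.code)
  | .dia _ _ M φ => Nat.pair 4 (Nat.pair M.code φ.code)
  | .box _ _ M φ => Nat.pair 5 (Nat.pair M.code φ.code)

open Turing Turing.PartrecToTM2 in
/-- A control point of the stack machine: the `TM2` statement still to be executed, together with
the value of the internal variable. -/
abbrev Ctl : Type := TM2.Stmt (fun _ : K' => Γ') Λ' (Option Γ') × Option Γ'

namespace Ctl

open Turing Turing.PartrecToTM2

/-- The contents of the four stacks. -/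
abbrev Stacks : Type := (K' → (List Γ' : Type))

/-- Mathlib's stack program `tr`, with its type `Stmt'` unfolded. -/
def prog : Λ' → TM2.Stmt (fun _ : K' => Γ') Λ' (Option Γ') := tr

/-- The next control point, given the symbol `o` observed on the stack read by the current
statement (`none` for an empty stack). Statements that read no stack ignore `o`; only `halt` has
no successor. -/
def nxt : Ctl → Option Γ' → Option Ctl
  | (.push _ _ q, s), _ => some (q, s)
  | (.peek _ f q, s), o => some (q, f s o)
  | (.pop _ f q, s), o => some (q, f s o)
  | (.load a q, s), _ => some (q, a s)
  | (.branch p q₁ q₂, s), _ => some (cond (p s) q₁ q₂, s)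
  | (.goto l, s), _ => some (prog (l s), s)
  | (.halt, _), _ => none

/-- Whether the current statement reads the top of stack `k`. -/
def chk : Ctl → K' → Bool
  | (.peek k' _ _, _), k => k' = k
  | (.pop k' _ _, _), k => k' = k
  | _, _ => false

/-- The symbol actually observed by the current statement. -/
def obs : Ctl → Stacks → Option Γ'
  | (.peek k _ _, _), S => (S k).head?
  | (.pop k _ _, _), S => (S k).head?
  | _, _ => none

/-- The stacks after the current statement. -/
def upd : Ctl → Stacks → Stacks
  | (.push k f _, s), S => Function.update S k (f s :: S k)
  | (.pop k _ _, _), S => Function.update S k (S k).tail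
  | _, S => S

/-- The word replacing the top symbol `g` of stack `k`, where `none` is the bottom marker, which
is never removed. -/
def newTop : Ctl → K' → Option Γ' → List (Option Γ')
  | (.push k' f _, s), k, g => if k = k' then [some (f s), g] else [g]
  | (.pop k' _ _, _), k, g => if k = k' then (if g = none then [none] else []) else [g]
  | _, _, g => [g]

/-- Whether the current statement is `halt`. -/
def isHalt : Ctl → Bool
  | (.halt, _) => true
  | _ => false

/-- A stack with the bottom marker `none` added below it. -/
def emb (L : List Γ') : List (Option Γ') := L.map some ++ [none]

theorem emb_upd (x : Ctl) (S : Stacks) (k : K') :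
    ∃ r, emb (S k) = (S k).head? :: r ∧ newTop x k (S k).head? ++ r = emb (upd x S k) := by
  rcases x with ⟨q, s⟩
  rcases hL : S k with _ | ⟨a, L⟩
  · refine ⟨[], by simp [emb], ?_⟩
    cases q <;> simp [newTop, upd, emb, hL]
    all_goals
      by_cases h : k = ‹K'›
      · subst h; simp [hL]
      · simp [h, hL]
  · refine ⟨L.map some ++ [none], by simp [emb], ?_⟩
    cases q <;> simp [newTop, upd, emb, hL]
    all_goals
      by_cases h : k = ‹K'›
      · subst h; simp [hL]
      · simp [h, hL]

theorem nxt_eq_of_chk (x : Ctl) (S : Stacks) (o : Option Γ')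
    (h : ∀ k, chk x k = true → o = (S k).head?) : nxt x o = nxt x (obs x S) := by
  rcases x with ⟨q, s⟩
  cases q <;> simp_all [nxt, obs, chk]

theorem obs_eq_of_chk (x : Ctl) (S : Stacks) (k : K') (h : chk x k = true) :
    obs x S = (S k).head? := by
  rcases x with ⟨q, s⟩
  cases q <;> simp_all [obs, chk]

/-- The stack machine halts from the control point `x` and the stacks `S`, when statements are
executed one at a time. -/
inductive Halts : Ctl → Stacks → Prop
  | done {x S} : isHalt x = true → Halts x S
  | step {x S y} : nxt x (obs x S) = some y → Halts y (upd x S) → Halts x S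

/-! ### One-statement execution and Mathlib's evaluation of `TM2` machines -/

theorem halts_of_stepAux (q : TM2.Stmt (fun _ : K' => Γ') Λ' (Option Γ')) (v : Option Γ')
    (S : Stacks)
    (h : ∀ l, (TM2.stepAux q v S).l = some l →
      Halts (prog l, (TM2.stepAux q v S).var) (TM2.stepAux q v S).stk) :
    Halts (q, v) S := by
  induction q generalizing v S with
  | push k f q ih => exact .step rfl (ih _ _ h)
  | peek k f q ih => exact .step rfl (ih _ _ h)
  | pop k f q ih => exact .step rfl (ih _ _ h)
  | load a q ih => exact .step rfl (ih _ _ h)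
  | branch p q₁ q₂ ih₁ ih₂ =>
    refine .step rfl ?_
    rw [TM2.stepAux] at h
    cases hp : p v
    · rw [hp] at h; exact ih₂ _ _ h
    · rw [hp] at h; exact ih₁ _ _ h
  | goto l => exact .step rfl (h _ rfl)
  | halt => exact .done rfl

theorem halts_of_reaches {c d : TM2.Cfg (fun _ : K' => Γ') Λ' (Option Γ')}
    (h : StateTransition.Reaches (TM2.step prog) c d) (hd : TM2.step prog d = none) :
    ∀ l, c.l = some l → Halts (prog l, c.var) c.stk := by
  induction h using Relation.ReflTransGen.head_induction_on with
  | refl =>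
    rintro l hl
    rcases d with ⟨_ | l', v, S⟩
    · cases hl
    · cases hd
  | head hab _ ih =>
    rename_i a b _
    rintro l hl
    rcases a with ⟨_ | l', v, S⟩
    · cases hl
    · obtain rfl : l' = l := by simpa using hl
      have hb : TM2.stepAux (prog l') v S = b := by
        have h : some (TM2.stepAux (prog l') v S) = some b := hab
        exact Option.some.inj h
      subst hb
      exact halts_of_stepAux _ _ _ ih

theorem eval_some (l : Λ') (v : Option Γ') (S : Stacks) :
    StateTransition.eval (TM2.step prog) ⟨some l, v, S⟩ =
      StateTransition.eval (TM2.step prog) (TM2.stepAux (prog l) v S) :=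
  StateTransition.reaches_eval
    (Relation.ReflTransGen.single (r := fun a b => b ∈ TM2.step prog a) rfl)

theorem eval_dom_of_halts {x : Ctl} {S : Stacks} (h : Halts x S) :
    (StateTransition.eval (TM2.step prog) (TM2.stepAux x.1 x.2 S)).Dom := by
  induction h with
  | @done x S hx =>
    rcases x with ⟨q, v⟩
    cases q <;> simp [isHalt] at hx
    exact Part.dom_iff_mem.2 ⟨_, StateTransition.mem_eval.2 ⟨.refl, rfl⟩⟩
  | @step x S y hy _ ih =>
    rcases x with ⟨q, v⟩
    cases q <;> simp only [nxt, Option.some.injEq, reduceCtorEq] at hy <;> subst hy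
    case goto =>
      dsimp only
      rw [TM2.stepAux, eval_some]
      exact ih
    case branch p q₁ q₂ _ =>
      dsimp only
      rw [TM2.stepAux]
      cases hp : p v <;> (rw [hp] at ih; exact ih)
    all_goals exact ih

theorem eval_dom_iff_halts (l : Λ') (v : Option Γ') (S : Stacks) :
    (StateTransition.eval (TM2.step prog) ⟨some l, v, S⟩).Dom ↔ Halts (prog l, v) S := by
  constructor
  · intro h
    obtain ⟨d, hd⟩ := Part.dom_iff_mem.1 h
    obtain ⟨h₁, h₂⟩ := StateTransition.mem_eval.1 hd
    exact halts_of_reaches h₁ h₂ l rfl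
  · intro h
    rw [eval_some]
    exact eval_dom_of_halts h

/-! ### Finitely many control points -/

/-- `T` contains every control point reachable from one of its members. -/
def Closed (T : Set Ctl) : Prop := ∀ x ∈ T, ∀ o y, nxt x o = some y → y ∈ T

theorem exists_finite_closed (c : ToPartrec.Code) :
    ∃ T : Set Ctl, T.Finite ∧ Closed T ∧ (prog (trNormal c Cont'.halt), none) ∈ T := by
  let _ : Inhabited Λ' := ⟨trNormal c Cont'.halt⟩
  have ss : TM2.Supports prog (codeSupp c Cont'.halt) := tr_supports c Cont'.halt
  have hlab : ∀ l ∈ codeSupp c Cont'.halt, some (prog l) ∈ TM2.stmts prog (codeSupp c Cont'.halt) := by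
    intro l hl
    simp only [TM2.stmts, Finset.mem_insertNone, Finset.mem_biUnion, Option.mem_def,
      Option.some.injEq, forall_eq']
    exact ⟨l, hl, TM2.stmts₁_self⟩
  refine ⟨{x | some x.1 ∈ TM2.stmts prog (codeSupp c Cont'.halt)}, ?_, ?_, hlab _ ss.1⟩
  · have hf : {q | some q ∈ TM2.stmts prog (codeSupp c Cont'.halt)}.Finite :=
      (Finset.finite_toSet (TM2.stmts prog (codeSupp c Cont'.halt))).preimage
        (Option.some_injective _).injOn
    refine (hf.prod (Set.finite_univ (α := Option Γ'))).subset ?_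
    rintro ⟨q, s⟩ h
    exact ⟨h, trivial⟩
  · rintro ⟨q, s⟩ hx o y hy
    have hs := TM2.stmts_supportsStmt ss hx
    have key : ∀ q', q' ∈ TM2.stmts₁ q → some q' ∈ TM2.stmts prog (codeSupp c Cont'.halt) :=
      fun q' h => TM2.stmts_trans h hx
    cases q <;> simp only [nxt, Option.some.injEq, reduceCtorEq] at hy <;> subst hy
    case goto l => exact hlab _ (hs _)
    case branch p q₁ q₂ =>
      refine key _ ?_
      cases p s <;> simp [TM2.stmts₁, TM2.stmts₁_self]
    all_goals exact key _ (by simp [TM2.stmts₁, TM2.stmts₁_self])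

/-- A numbering of the members of a set `T` of control points, and of the letters, states and
stack symbols of the automata built from it. A letter is a control point with an observed symbol;
the state `none` is the initial one; the stack symbol `none` is the bottom marker. -/
structure Coding (T : Set Ctl) where
  N : ℕ
  nl : ℕ
  ns : ℕ
  ng : ℕ
  enc : Ctl → Fin N
  dec : Fin N → Ctl
  dec_enc : ∀ x ∈ T, dec (enc x) = x
  eL : Fin N × Option Γ' ≃ Fin nl
  eS : Option (Fin N) ≃ Fin ns
  eG : Option Γ' ≃ Fin ng

theorem exists_coding {T : Set Ctl} (hT : T.Finite) {x₀ : Ctl} (hx₀ : x₀ ∈ T) :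
    Nonempty (Coding T) := by
  classical
  have := hT.fintype
  let e := Fintype.equivFin T
  exact ⟨{
    N := _
    nl := _
    ns := _
    ng := _
    enc := fun x => if h : x ∈ T then e ⟨x, h⟩ else e ⟨x₀, hx₀⟩
    dec := fun i => (e.symm i).1
    dec_enc := fun x hx => by simp [hx]
    eL := Fintype.equivFin _
    eS := Fintype.equivFin _
    eG := Fintype.equivFin _ }⟩

/-! ### The automaton checking one stack -/

variable {T : Set Ctl} (C : Coding T) (x₀ : Ctl)

/-- The automaton for stack `k`. Its first move ignores the letter and loads `w` on the stack.
Afterwards it follows the control points listed by the word, checks the observed symbols whenever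
they concern stack `k`, and performs the operations on stack `k`. It accepts when the control
point is `halt`. -/
def mach (k : K') (w : List Γ') : DPDA (Fin C.nl) C.ns C.ng where
  δ q a g := match C.eS.symm q with
    | none => some (C.eS (some (C.enc x₀)), (emb w).map C.eG)
    | some i =>
      if i = (C.eL.symm a).1 ∧ (chk (C.dec i) k = true → (C.eL.symm a).2 = C.eG.symm g) then
        (nxt (C.dec i) (C.eL.symm a).2).map
          (fun y => (C.eS (some (C.enc y)), (newTop (C.dec i) k (C.eG.symm g)).map C.eG))
      else none
  start := C.eS none
  z0 := C.eG none
  final q := match C.eS.symm q with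
    | none => false
    | some i => isHalt (C.dec i)

/-- The configuration of the automaton for stack `k` at control point `x` and stacks `S`. -/
def cfg (x : Ctl) (S : Stacks) (k : K') : Fin C.ns × List (Fin C.ng) :=
  (C.eS (some (C.enc x)), (emb (S k)).map C.eG)

/-- The automaton has an accepting run on `u` from the configuration `c`. -/
def AccFrom {A : Type} {n m : ℕ} (M : DPDA A n m) (c : Fin n × List (Fin m)) (u : List A) : Prop :=
  ∃ d, M.run c u = some d ∧ M.final d.1 = true

theorem accFrom_cons {A : Type} {n m : ℕ} (M : DPDA A n m) (c : Fin n × List (Fin m)) (a : A)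
    (u : List A) : AccFrom M c (a :: u) ↔ ∃ d, M.stepc c a = some d ∧ AccFrom M d u := by
  unfold AccFrom
  rw [DPDA.run]
  cases M.stepc c a <;> simp

theorem stepc_start (k : K') (S : Stacks) (a : Fin C.nl) :
    (mach C x₀ k (S k)).stepc ((mach C x₀ k (S k)).start, [(mach C x₀ k (S k)).z0]) a =
      some (cfg C x₀ S k) := by
  simp [DPDA.stepc, mach, cfg]

theorem stepc_cfg {x : Ctl} (hx : x ∈ T) (S : Stacks) (k : K') (w : List Γ') (a : Fin C.nl) :
    (mach C x₀ k w).stepc (cfg C x S k) a =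
      if C.enc x = (C.eL.symm a).1 ∧ (chk x k = true → (C.eL.symm a).2 = (S k).head?) then
        (nxt x (C.eL.symm a).2).map (fun y => cfg C y (upd x S) k)
      else none := by
  obtain ⟨r, h₁, h₂⟩ := emb_upd x S k
  rw [cfg, h₁]
  simp only [DPDA.stepc, mach, List.map_cons, Equiv.symm_apply_apply, C.dec_enc x hx]
  split_ifs
  · rw [Option.map_map]
    congr 1
    funext y
    simp [cfg, ← h₂]
  · rfl

theorem final_cfg {x : Ctl} (hx : x ∈ T) (S : Stacks) (k : K') (w : List Γ') :
    (mach C x₀ k w).final (cfg C x S k).1 = isHalt x := by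
  simp [mach, cfg, C.dec_enc x hx]

/-- A halting computation yields one word on which all four automata have accepting runs. -/
theorem exists_word_of_halts (hT : Closed T) (w : K' → List Γ') {x : Ctl} {S : Stacks}
    (h : Halts x S) (hx : x ∈ T) :
    ∃ u, ∀ k, AccFrom (mach C x₀ k (w k)) (cfg C x S k) u := by
  induction h with
  | done hh => exact ⟨[], fun k => ⟨_, rfl, by rw [final_cfg C x₀ hx, hh]⟩⟩
  | @step x S y hy _ ih =>
    obtain ⟨u, hu⟩ := ih (hT x hx _ y hy)
    refine ⟨C.eL (C.enc x, obs x S) :: u, fun k => (accFrom_cons ..).2 ⟨_, ?_, hu k⟩⟩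
    rw [stepc_cfg C x₀ hx, Equiv.symm_apply_apply, if_pos ⟨rfl, obs_eq_of_chk x S k⟩, hy]
    rfl

/-- The prefix of length `n` of an infinite word. -/
def pre {A : Type} (α : ℕ → A) (n : ℕ) : List A := (List.range n).map α

theorem pre_succ {A : Type} (α : ℕ → A) (n : ℕ) :
    pre α (n + 1) = α 0 :: pre (fun i => α (i + 1)) n := by
  simp [pre, List.range_succ_eq_map, Function.comp_def]

/-- If each automaton accepts some prefix of the same infinite word, the machine halts. The
accepted prefixes need not be assumed equal: as long as the control point is not `halt`, all
four runs continue. -/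
theorem halts_of_accFrom (hT : Closed T) (w : K' → List Γ') (n : ℕ) :
    ∀ (x : Ctl) (S : Stacks) (α : ℕ → Fin C.nl), x ∈ T →
      AccFrom (mach C x₀ K'.main (w K'.main)) (cfg C x S K'.main) (pre α n) →
      (∀ k, ∃ l, AccFrom (mach C x₀ k (w k)) (cfg C x S k) (pre α l)) → Halts x S := by
  induction n with
  | zero =>
    rintro x S α hx ⟨d, hd, hf⟩ -
    obtain rfl : cfg C x S K'.main = d := Option.some.inj hd
    exact .done (by rwa [final_cfg C x₀ hx] at hf)
  | succ n ih =>
    intro x S α hx hm h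
    by_cases hh : isHalt x = true
    · exact .done hh
    have step : ∀ k l, AccFrom (mach C x₀ k (w k)) (cfg C x S k) (pre α (l + 1)) →
        (chk x k = true → (C.eL.symm (α 0)).2 = (S k).head?) ∧
        ∃ y, nxt x (C.eL.symm (α 0)).2 = some y ∧
          AccFrom (mach C x₀ k (w k)) (cfg C y (upd x S) k) (pre (fun i => α (i + 1)) l) := by
      intro k l hk
      rw [pre_succ, accFrom_cons] at hk
      obtain ⟨d, hd, hu⟩ := hk
      rw [stepc_cfg C x₀ hx] at hd
      split_ifs at hd with hc
      obtain ⟨y, hy, rfl⟩ := Option.map_eq_some_iff.1 hd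
      exact ⟨hc.2, y, hy, hu⟩
    have step' : ∀ k, ∃ l, AccFrom (mach C x₀ k (w k)) (cfg C x S k) (pre α (l + 1)) := by
      intro k
      obtain ⟨l, hl⟩ := h k
      cases l with
      | zero =>
        obtain ⟨d, hd, hf⟩ := hl
        obtain rfl : cfg C x S k = d := Option.some.inj hd
        rw [final_cfg C x₀ hx] at hf
        exact absurd hf hh
      | succ l => exact ⟨l, hl⟩
    obtain ⟨-, y, hy, hm'⟩ := step _ _ hm
    have hobs : nxt x (obs x S) = some y := by
      rw [← hy]
      refine (nxt_eq_of_chk x S _ fun k => ?_).symm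
      obtain ⟨l, hl⟩ := step' k
      exact (step k l hl).1
    refine .step hobs (ih y _ _ (hT x hx _ y hy) hm' fun k => ?_)
    obtain ⟨l, hl⟩ := step' k
    obtain ⟨-, z, hz, hacc⟩ := step k l hl
    obtain rfl : y = z := Option.some.inj (hy.symm.trans hz)
    exact ⟨l, hacc⟩

/-! ### The formula -/

/-- A valid formula; it needs some letter to be written down. -/
def top {A : Type} (a : A) : DPLDL A := .or (.atom a) (.neg (.atom a))

theorem sat_top {A : Type} (a : A) (α : ℕ → A) (l : ℕ) : (top a).sat α l := by
  simp only [top, DPLDL.sat]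
  exact em _

/-- Each of the four automata, loaded with the stack contents `S`, accepts some prefix. -/
def form (a : Fin C.nl) (S : Stacks) : DPLDL (Fin C.nl) :=
  let d k := DPLDL.dia _ _ (mach C x₀ k (S k)) (top a)
  .and (.and (d .main) (d .rev)) (.and (d .aux) (d .stack))

theorem sat_form (a : Fin C.nl) (S : Stacks) (α : ℕ → Fin C.nl) :
    (form C x₀ a S).sat α 0 ↔ ∀ k, ∃ l, (mach C x₀ k (S k)).Accepts (pre α l) := by
  have hd : ∀ k, (DPLDL.dia _ _ (mach C x₀ k (S k)) (top a)).sat α 0 ↔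
      ∃ l, (mach C x₀ k (S k)).Accepts (pre α l) := by
    intro k
    simp [DPLDL.sat, sat_top, infixW, pre]
  simp only [form]
  constructor
  · rintro ⟨⟨h₁, h₂⟩, h₃, h₄⟩ k
    cases k <;> exact (hd _).1 ‹_›
  · intro h
    exact ⟨⟨(hd _).2 (h _), (hd _).2 (h _)⟩, (hd _).2 (h _), (hd _).2 (h _)⟩

theorem satisfiable_iff_halts (hT : Closed T) (hx₀ : x₀ ∈ T) (a : Fin C.nl) (S : Stacks) :
    (∃ α, (form C x₀ a S).sat α 0) ↔ Halts x₀ S := by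
  simp only [sat_form]
  constructor
  · rintro ⟨α, h⟩
    have key : ∀ k, ∃ l, AccFrom (mach C x₀ k (S k)) (cfg C x₀ S k)
        (pre (fun i => α (i + 1)) l) := by
      intro k
      obtain ⟨l, hl⟩ := h k
      cases l with
      | zero =>
        obtain ⟨d, hd, hf⟩ := hl
        cases hd
        simp [mach] at hf
      | succ l =>
        rw [pre_succ] at hl
        obtain ⟨d, hd, hu⟩ := (accFrom_cons ..).1 hl
        rw [stepc_start] at hd
        cases hd
        exact ⟨l, hu⟩
    obtain ⟨n, hn⟩ := key .main
    exact halts_of_accFrom C x₀ hT S n x₀ S _ hx₀ hn key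
  · intro h
    obtain ⟨u, hu⟩ := exists_word_of_halts C x₀ hT S h hx₀
    refine ⟨fun i => (a :: u).getD i a, fun k => ⟨(a :: u).length, ?_⟩⟩
    have hp : pre (fun i => (a :: u).getD i a) (a :: u).length = a :: u := by
      refine List.ext_getElem (by simp [pre]) fun i h₁ h₂ => ?_
      simp only [pre, List.getElem_map, List.getElem_range]
      exact List.getD_eq_getElem _ _ h₂
    rw [hp]
    exact (accFrom_cons ..).2 ⟨_, stepc_start C x₀ k S a, hu k⟩

/-! ### Computability of the reduction -/

theorem primrec_bits : Primrec Nat.bits := by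
  have key : Primrec₂ fun (_ : Unit) n => Nat.bits n := by
    refine Primrec.nat_strong_rec _
      (g := fun _ L => if L.length = 0 then some [] else
        (L[L.length / 2]?).map fun t => (L.length).bodd :: t) ?_ ?_
    · have hl : Primrec fun p : Unit × List (List Bool) => p.2.length :=
        Primrec.list_length.comp Primrec.snd
      refine Primrec.ite (Primrec.eq.comp hl (Primrec.const 0)) (Primrec.const _) ?_
      refine Primrec.option_map (Primrec.list_getElem?.comp Primrec.snd
        (Primrec.nat_div.comp hl (Primrec.const 2))) ?_
      exact Primrec.list_cons.comp (Primrec.nat_bodd.comp (hl.comp Primrec.fst)) Primrec.snd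
    · rintro - n
      rcases Nat.eq_zero_or_pos n with rfl | hn
      · simp
      · have h2 : n / 2 < n := by omega
        have hne : n ≠ 0 := by omega
        simp only [List.length_map, List.length_range, hne, if_false]
        rw [List.getElem?_map, List.getElem?_range h2]
        simp only [Option.map_some, Option.some.injEq]
        conv_rhs => rw [← Nat.bit_bodd_div2 n]
        rw [Nat.bits_append_bit, Nat.div2_val]
        intro h
        rw [Nat.div2_val] at h
        have h3 := Nat.bodd_add_div2 n
        rw [Nat.div2_val, h] at h3
        cases hb : n.bodd
        · rw [hb] at h3; simp at h3; omega
        · rfl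
  exact key.comp (Primrec.const ()) Primrec.id

/-- The binary symbol used by Mathlib's stack machine for a bit. -/
def bitSym (b : Bool) : Γ' := cond b .bit1 .bit0

theorem trPosNum_eq (p : PosNum) : trPosNum p = (Nat.bits p).map bitSym := by
  induction p with
  | one => simp [trPosNum, bitSym]
  | bit0 p ih =>
    have hp := PosNum.to_nat_pos p
    rw [trPosNum, ih, PosNum.cast_bit0, ← two_mul, Nat.bit0_bits _ (by omega)]
    rfl
  | bit1 p ih =>
    rw [trPosNum, ih, PosNum.cast_bit1, ← two_mul, Nat.bit1_bits]
    rfl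

theorem trNat_eq (n : ℕ) : trNat n = (Nat.bits n).map bitSym := by
  have h : ((n : Num) : ℕ) = n := Num.to_of_nat n
  rw [trNat]
  conv_rhs => rw [← h]
  cases (n : Num) with
  | zero => simp [trNum]
  | pos p => exact trPosNum_eq p

/-- The initial stacks of Mathlib's stack machine on the input `n`. -/
def input (n : ℕ) : Stacks := K'.elim (trList [n]) [] [] []

theorem primrec_emb_input (k : K') : Primrec fun n => (emb (input n k)).map C.eG := by
  cases k
  case main =>
    have h : ∀ n, (emb (input n .main)).map C.eG =
        (Nat.bits n).map (fun b => C.eG (some (bitSym b))) ++ [C.eG (some .cons), C.eG none] := by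
      intro n
      simp [emb, input, trNat_eq]
    simp only [h]
    exact Primrec.list_append.comp
      (Primrec.list_map primrec_bits ((Primrec.dom_finite fun b => C.eG (some (bitSym b))).comp
        Primrec.snd)) (Primrec.const _)
  all_goals exact Primrec.const _

theorem primrec_code_mach (k : K') : Primrec fun n => (mach C x₀ k (input n k)).code := by
  unfold DPDA.code
  refine Primrec.encode.comp (Primrec.pair (Primrec.const _) (Primrec.pair (Primrec.const _)
    (Primrec.pair ?_ (Primrec.const ((C.eS none).val, (C.eG none).val,
      List.ofFn fun q => (mach C x₀ k []).final q)))))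
  refine Primrec.list_ofFn fun q => Primrec.list_ofFn fun a => Primrec.list_ofFn fun g => ?_
  simp only [mach]
  cases C.eS.symm q with
  | none =>
    exact Primrec.option_some.comp (Primrec.pair (Primrec.const _) (primrec_emb_input C k))
  | some i => exact Primrec.const _

theorem primrec_code_form (a : Fin C.nl) : Primrec fun n => (form C x₀ a (input n)).code := by
  have hp {f g : ℕ → ℕ} (hf : Primrec f) (hg : Primrec g) : Primrec fun n => Nat.pair (f n) (g n) :=
    Primrec₂.natPair.comp hf hg
  have hd : ∀ k, Primrec fun n =>
      (DPLDL.dia _ _ (mach C x₀ k (input n k)) (top a)).code := fun k =>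
    hp (Primrec.const 4) (hp (primrec_code_mach C x₀ k) (Primrec.const _))
  exact hp (Primrec.const 2) (hp (hp (Primrec.const 2) (hp (hd _) (hd _)))
    (hp (Primrec.const 2) (hp (hd _) (hd _))))

/-! ### A universal stack machine -/

/-- There is a program whose halting on the input `n` is the halting of the partial recursive
function with code number `n` on the input `0`. -/
theorem exists_universal : ∃ c : ToPartrec.Code, ∀ p : Nat.Partrec.Code,
    (c.eval [Encodable.encode p]).Dom ↔ (p.eval 0).Dom := by
  have hF : Partrec fun n : ℕ => Nat.Partrec.Code.eval (Denumerable.ofNat Nat.Partrec.Code n) 0 :=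
    Nat.Partrec.Code.eval_part.comp (Computable.ofNat _) (Computable.const 0)
  obtain ⟨c, hc⟩ := ToPartrec.Code.exists_code (Nat.Partrec'.part_iff₁.2 hF)
  refine ⟨c, fun p => ?_⟩
  have h := hc ⟨[Encodable.encode p], rfl⟩
  simp only [List.Vector.head] at h
  rw [h]
  simp

theorem eval_dom_iff_halts_input (c : ToPartrec.Code) (n : ℕ) :
    (c.eval [n]).Dom ↔ Halts (prog (trNormal c Cont'.halt), none) (input n) := by
  rw [← eval_dom_iff_halts]
  have h : (StateTransition.eval (TM2.step prog)
      ⟨some (trNormal c Cont'.halt), none, input n⟩).Dom ↔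
      (PartrecToTM2.halt <$> c.eval [n]).Dom :=
    iff_of_eq (congrArg Part.Dom (tr_eval c [n]))
  exact h.symm

end Ctl

/-- There is a finite alphabet over which the satisfiability problem
for DPLDL is undecidable: no computable function decides, given the encoding of a
DPLDL formula, whether the formula has a model. -/
theorem dpldl_satisfiability_undecidable :
    ∃ k : ℕ, ¬ ∃ f : ℕ → Bool, Computable f ∧
      ∀ φ : DPLDL (Fin k),
        (f φ.code = true ↔ ∃ α : ℕ → Fin k, DPLDL.sat φ α 0) := by
  obtain ⟨c, hc⟩ := Ctl.exists_universal
  obtain ⟨T, hfin, hT, hx₀⟩ := Ctl.exists_finite_closed c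
  obtain ⟨C⟩ : Nonempty (Ctl.Coding T) := Ctl.exists_coding hfin hx₀
  refine ⟨C.nl, ?_⟩
  rintro ⟨f, hf, hsat⟩
  let x₀ : Ctl :=
    (Ctl.prog (Turing.PartrecToTM2.trNormal c Turing.PartrecToTM2.Cont'.halt), none)
  let a : Fin C.nl := C.eL (C.enc x₀, none)
  refine ComputablePred.halting_problem 0 (ComputablePred.computable_iff.2
    ⟨fun p => f (Ctl.form C x₀ a (Ctl.input (Encodable.encode p))).code, ?_, ?_⟩)
  · exact hf.comp ((Ctl.primrec_code_form C x₀ a).to_comp.comp Computable.encode)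
  · funext p
    rw [hsat, Ctl.satisfiable_iff_halts C x₀ hT hx₀, ← Ctl.eval_dom_iff_halts_input, hc]
end
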